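/- For every finite simple graph G on n vertices and every planar drawing Γ of G, there exists a subset V' of the vertex set of G with 2·|V'| ≥ n such that the restriction of Γ to the induced subgraph G[V'] is an outerplane drawing, i.e., every vertex point of V' lies in the closure of the unique unbounded connected component of the complement in ℝ² of the union of all vertex points and edge arcs of the restricted drawing. -/

import Mathlib

open Set Bornology

/-- Points of the Euclidean plane. -/
abbrev Pt : Type := ℝ × ℝ

/-- `A` is an arc connecting `p` and `q`: the image of a continuous injective map
from `[0,1]` to the plane sending `0` to `p` and `1` to `q`. -/
def IsArcBetween (A : Set Pt) (p q : Pt) : Prop :=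
  ∃ f : ℝ → Pt, ContinuousOn f (Set.Icc 0 1) ∧ Set.InjOn f (Set.Icc 0 1) ∧
    f 0 = p ∧ f 1 = q ∧ A = f '' Set.Icc 0 1

/-- A planar drawing of a finite simple graph `G`: an injective placement of the
vertices in the plane, together with an arc for each edge joining the images of its
endpoints, such that no arc passes through the image of a vertex other than its two
endpoints, and two distinct arcs intersect only at images of shared endpoints. -/
structure PlanarDrawing {V : Type} [Fintype V] (G : SimpleGraph V) where
  ρ : V → Pt
  inj : Function.Injective ρ
  arc : Sym2 V → Set Pt
  arc_isArc : ∀ u v : V, G.Adj u v → IsArcBetween (arc s(u, v)) (ρ u) (ρ v)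
  vertex_mem : ∀ e ∈ G.edgeSet, ∀ w : V, ρ w ∈ arc e → w ∈ e
  arcs_cross : ∀ e ∈ G.edgeSet, ∀ e' ∈ G.edgeSet, e ≠ e' →
    ∀ x ∈ arc e ∩ arc e', ∃ w : V, w ∈ e ∧ w ∈ e' ∧ x = ρ w

/-- `pts` lies in the closure of every unbounded connected component of the
complement of the drawing set `D` (for a compact drawing set there is exactly one
such component, the outer face). -/
def IsOuterplanePair (D : Set Pt) (pts : Set Pt) : Prop :=
  ∀ U : Set Pt, (∃ x ∉ D, U = connectedComponentIn Dᶜ x) →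
    ¬ Bornology.IsBounded U → pts ⊆ closure U

/-- The edges of `G` having both endpoints in `V'`. -/
def restrictedEdges {V : Type} (G : SimpleGraph V) (V' : Set V) : Set (Sym2 V) :=
  {e | e ∈ G.edgeSet ∧ ∀ v ∈ e, v ∈ V'}

/-- The union of the vertex points of `V'` and the arcs of the edges in `E`,
in the drawing `Γ`. -/
def drawingUnion {V : Type} [Fintype V] {G : SimpleGraph V}
    (Γ : PlanarDrawing G) (V' : Set V) (E : Set (Sym2 V)) : Set Pt :=
  (Γ.ρ '' V') ∪ ⋃ e ∈ E, Γ.arc e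

/-!
Deleting a set `D` of vertices from a drawing exposes a further vertex on the outer face whenever
`D` contains an already exposed vertex that is adjacent to it or shares a face with it. In terms of
the cofacial graph, which joins vertices that are adjacent or lie on a common face, everything
reachable from the outer face by walks all of whose vertices but the last lie in `D` becomes
exposed, so it suffices to find `D` of at most half the vertices that reaches every vertex in this
way.

Starting from the set `O` of vertices on the outer face, one enlarges a set `W ⊇ O` one vertex at a
time, together with two sets `A` and `B` of total size at most `|W|`, each of which exposes all of
`W`. A new vertex `y` is affordable when it has a neighbour `c` in one of the two sets and another
neighbour `d` in `W`: the first set then exposes `y` for free, and adding `d` to the other set pays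
one for the one vertex gained. At the end the smaller of `A` and `B` is the required `D`.

That such a `y` exists is the planar part. If no cofacial neighbour of `w ∈ W` outside `W` had a
second neighbour in `W`, the drawing would split at `w` into two sides, although the faces and
edges around `w` connect them without crossing the rest of the drawing. Janiszewski's theorem
excludes this: joining to a compact set an arc that meets it in at most one point does not separate
the plane any further. It is proved through logarithms, since two points `p` and `q` are separated
by a compact set `X` exactly when `(z - p) / (z - q)` has no continuous logarithm on `X`.
-/

section Separation

variable {E F : Type*} [TopologicalSpace E] [TopologicalSpace F] {U X Y C K₁ K₂ : Set E}
  {a p q r : E}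

/-- `X` does not separate `p` and `q`: both points lie off `X`, in the same component of its
complement. -/
def Unseparated (X : Set E) (p q : E) : Prop :=
  q ∈ connectedComponentIn Xᶜ p

namespace Unseparated

theorem connectedComponentIn_eq (h : Unseparated X p q) :
    connectedComponentIn Xᶜ p = connectedComponentIn Xᶜ q :=
  _root_.connectedComponentIn_eq h

theorem notMem_left (h : Unseparated X p q) : p ∉ X :=
  connectedComponentIn_nonempty_iff.1 ⟨q, h⟩

theorem notMem_right (h : Unseparated X p q) : q ∉ X :=
  connectedComponentIn_subset _ _ h

theorem refl (hp : p ∉ X) : Unseparated X p p :=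
  mem_connectedComponentIn hp

theorem symm (h : Unseparated X p q) : Unseparated X q p :=
  h.connectedComponentIn_eq.subset (refl h.notMem_left)

theorem trans (h : Unseparated X p q) (h' : Unseparated X q r) : Unseparated X p r :=
  h.connectedComponentIn_eq.symm.subset h'

theorem anti (hXY : X ⊆ Y) (h : Unseparated Y p q) : Unseparated X p q :=
  connectedComponentIn_mono p (compl_subset_compl.2 hXY) h

theorem of_isPreconnected (hC : IsPreconnected C) (hCX : Disjoint C X) (hp : p ∈ C) (hq : q ∈ C) :
    Unseparated X p q :=
  hC.subset_connectedComponentIn hp hCX.subset_compl_right hq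

theorem image (φ : E ≃ₜ F) (h : Unseparated X p q) : Unseparated (φ '' X) (φ p) (φ q) := by
  rw [Unseparated, ← image_compl_eq φ.bijective, ← φ.image_connectedComponentIn h.notMem_left]
  exact mem_image_of_mem φ h

end Unseparated

section LocallyConnected

variable [LocallyConnectedSpace E]

theorem mem_connectedComponentIn_of_mem_closure (hU : IsOpen U)
    (hp : p ∈ closure (connectedComponentIn U a)) (hpU : p ∈ U) :
    p ∈ connectedComponentIn U a := by
  obtain ⟨x, hxp, hxa⟩ :=
    mem_closure_iff.1 hp _ hU.connectedComponentIn (mem_connectedComponentIn hpU)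
  rw [connectedComponentIn_eq hxa, ← connectedComponentIn_eq hxp]
  exact mem_connectedComponentIn hpU

theorem connectedComponentIn_compl_subset_of_closure_inter_subset (hX : IsClosed X) (ha : a ∉ X)
    (h : closure (connectedComponentIn Xᶜ a) ∩ X ⊆ Y) :
    connectedComponentIn Yᶜ a ⊆ connectedComponentIn Xᶜ a := by
  by_cases haY : a ∈ Y
  · simp [connectedComponentIn_eq_empty (notMem_compl_iff.2 haY)]
  refine isPreconnected_connectedComponentIn.subset_of_closure_inter_subset
    hX.isOpen_compl.connectedComponentIn
    ⟨a, mem_connectedComponentIn haY, mem_connectedComponentIn ha⟩ ?_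
  rintro x ⟨hx, hxY⟩
  exact mem_connectedComponentIn_of_mem_closure hX.isOpen_compl hx
    fun hxX => connectedComponentIn_subset _ _ hxY (h ⟨hx, hxX⟩)

/-- The points of `X \ K` together with the components of `Xᶜ` satisfying `P`: one of the two sides
of a separation built from the components of `Xᶜ`. -/
def complSide (X K : Set E) (P : Set E → Prop) : Set E :=
  {x | x ∈ X \ K ∨ x ∉ X ∧ P (connectedComponentIn Xᶜ x)}

theorem isOpen_complSide {K : Set E} {P : Set E → Prop} (hX : IsClosed X) (hK : IsClosed K)
    (hP : ∀ x ∉ X, ¬ P (connectedComponentIn Xᶜ x) → Disjoint (connectedComponentIn Kᶜ x) X) :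
    IsOpen (complSide X K P) := by
  rw [isOpen_iff_mem_nhds]
  rintro x (⟨hxX, hxK⟩ | ⟨hxX, hxP⟩)
  · filter_upwards [hK.isOpen_compl.connectedComponentIn.mem_nhds (mem_connectedComponentIn hxK)]
      with y (hy : Unseparated K x y)
    by_cases hyX : y ∈ X
    · exact .inl ⟨hyX, hy.notMem_right⟩
    · exact .inr ⟨hyX, not_not.1 fun hyP => disjoint_left.1 (hP y hyX hyP) hy.symm hxX⟩
  · filter_upwards [hX.isOpen_compl.connectedComponentIn.mem_nhds (mem_connectedComponentIn hxX)]
      with y (hy : Unseparated X x y)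
    exact .inr ⟨hy.notMem_right, hy.connectedComponentIn_eq ▸ hxP⟩

theorem not_unseparated_inter {P : Set E → Prop} (hX : IsClosed X) (hK₁ : IsClosed K₁)
    (hK₂ : IsClosed K₂) (hcover : X ⊆ K₁ ∪ K₂)
    (h₁ : ∀ x ∉ X, P (connectedComponentIn Xᶜ x) → Disjoint (connectedComponentIn K₁ᶜ x) X)
    (h₂ : ∀ x ∉ X, ¬ P (connectedComponentIn Xᶜ x) → Disjoint (connectedComponentIn K₂ᶜ x) X)
    (hp : p ∈ complSide X K₁ fun C => ¬ P C) (hq : q ∈ complSide X K₂ P) :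
    ¬ Unseparated (K₁ ∩ K₂) p q := by
  intro hpq
  have hsides : connectedComponentIn (K₁ ∩ K₂)ᶜ p ⊆
      complSide X K₁ (fun C => ¬ P C) ∪ complSide X K₂ P := by
    intro x hx
    have hxK := connectedComponentIn_subset _ _ hx
    simp only [complSide, mem_union, mem_ofPred_eq, mem_sdiff, mem_compl_iff, mem_inter_iff]
      at hxK ⊢
    tauto
  obtain ⟨x, -, hx₁, hx₂⟩ := isPreconnected_connectedComponentIn _ _
    (isOpen_complSide hX hK₁ fun x hx hPx => h₁ x hx (not_not.1 hPx)) (isOpen_complSide hX hK₂ h₂)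
    hsides ⟨p, Unseparated.refl hpq.notMem_left, hp⟩ ⟨q, hpq, hq⟩
  have hxK := @hcover x
  simp only [complSide, mem_union, mem_ofPred_eq, mem_sdiff] at hx₁ hx₂ hxK
  tauto

end LocallyConnected

end Separation

section Unbounded

variable {E : Type*} [NormedAddCommGroup E] [NormedSpace ℝ E] {X : Set E} {p q : E}

theorem isPreconnected_compl_closedBall (hE : 1 < Module.rank ℝ E) (x : E) {r : ℝ} (hr : 0 ≤ r) :
    IsPreconnected (Metric.closedBall x r)ᶜ := by
  have himage : (fun t : ℝ × E => x + t.1 • t.2) '' Ioi r ×ˢ Metric.sphere 0 1 =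
      (Metric.closedBall x r)ᶜ := by
    ext y
    simp only [mem_image, mem_prod, mem_Ioi, mem_sphere_zero_iff_norm, Prod.exists, mem_compl_iff,
      mem_closedBall_iff_norm, not_le]
    constructor
    · rintro ⟨t, u, ⟨ht, hu⟩, rfl⟩
      simpa [norm_smul, hu, abs_of_pos (hr.trans_lt ht)] using ht
    · intro hy
      have hne : ‖y - x‖ ≠ 0 := (hr.trans_lt hy).ne'
      exact ⟨‖y - x‖, ‖y - x‖⁻¹ • (y - x), ⟨hy, by simp [norm_smul, hne]⟩, by simp [hne]⟩
  rw [← himage]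
  exact (isPreconnected_Ioi.prod (isPreconnected_sphere hE 0 1)).image _ (by fun_prop)

theorem exists_isBounded_isPreconnected_compl (hE : 1 < Module.rank ℝ E) (hX : IsBounded X) :
    ∃ B, X ⊆ B ∧ IsBounded B ∧ IsPreconnected Bᶜ := by
  obtain ⟨r, hr, hXr⟩ := hX.subset_closedBall_lt 0 0
  exact ⟨_, hXr, Metric.isBounded_closedBall, isPreconnected_compl_closedBall hE 0 hr.le⟩

theorem Unseparated.of_not_isBounded (hE : 1 < Module.rank ℝ E) (hX : IsBounded X)
    (hp : ¬ IsBounded (connectedComponentIn Xᶜ p))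
    (hq : ¬ IsBounded (connectedComponentIn Xᶜ q)) : Unseparated X p q := by
  obtain ⟨B, hXB, hB, hconn⟩ := exists_isBounded_isPreconnected_compl hE hX
  obtain ⟨p', hp', hp'B⟩ := not_subset.1 fun h => hp (hB.subset h)
  obtain ⟨q', hq', hq'B⟩ := not_subset.1 fun h => hq (hB.subset h)
  have hp'q' : Unseparated X p' q' :=
    .of_isPreconnected hconn (disjoint_compl_left_iff_subset.2 hXB) hp'B hq'B
  exact (Unseparated.trans hp' hp'q').trans (Unseparated.symm hq')

theorem exists_not_isBounded_connectedComponentIn_compl (hE : 1 < Module.rank ℝ E)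
    (hX : IsBounded X) : ∃ p, ¬ IsBounded (connectedComponentIn Xᶜ p) := by
  obtain ⟨B, hXB, hB, hconn⟩ := exists_isBounded_isPreconnected_compl hE hX
  have : Nontrivial E := rank_pos_iff_nontrivial.1 (zero_lt_one.trans hE)
  have hBc : ¬ IsBounded Bᶜ := fun h =>
    NormedSpace.unbounded_univ ℝ E (union_compl_self B ▸ hB.union h)
  obtain ⟨p, hp⟩ : Bᶜ.Nonempty := nonempty_iff_ne_empty.2 fun h => hBc (h ▸ isBounded_empty)
  exact ⟨p, fun h => hBc (h.subset
    (hconn.subset_connectedComponentIn hp (compl_subset_compl.2 hXB)))⟩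

theorem one_lt_rank_plane : 1 < Module.rank ℝ Pt := by
  simp [one_add_one_eq_two]

end Unbounded

section Logarithms

open Complex Metric

variable {E F : Type*} [TopologicalSpace E] [TopologicalSpace F] {X : Set E} {Y : Set F}
  {f f' : E → ℂ}

/-- `f` has a continuous logarithm on `X`. -/
def HasLogOn (f : E → ℂ) (X : Set E) : Prop :=
  ∃ g : E → ℂ, ContinuousOn g X ∧ ∀ x ∈ X, exp (g x) = f x

namespace HasLogOn

theorem inv (h : HasLogOn f X) : HasLogOn (fun x => (f x)⁻¹) X := by
  obtain ⟨g, hg, hgf⟩ := h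
  exact ⟨fun x => -g x, hg.neg, fun x hx => by rw [exp_neg, hgf x hx]⟩

theorem mul (h : HasLogOn f X) (h' : HasLogOn f' X) : HasLogOn (fun x => f x * f' x) X := by
  obtain ⟨g, hg, hgf⟩ := h
  obtain ⟨g', hg', hgf'⟩ := h'
  exact ⟨fun x => g x + g' x, hg.add hg', fun x hx => by rw [exp_add, hgf x hx, hgf' x hx]⟩

theorem congr (h : HasLogOn f X) (hf : EqOn f f' X) : HasLogOn f' X := by
  obtain ⟨g, hg, hgf⟩ := h
  exact ⟨g, hg, fun x hx => (hgf x hx).trans (hf hx)⟩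

theorem mono {X' : Set E} (h : HasLogOn f X) (hX : X' ⊆ X) : HasLogOn f X' := by
  obtain ⟨g, hg, hgf⟩ := h
  exact ⟨g, hg.mono hX, fun x hx => hgf x (hX hx)⟩

theorem comp (h : HasLogOn f X) {φ : F → E} (hφ : ContinuousOn φ Y) (hφX : MapsTo φ Y X) :
    HasLogOn (f ∘ φ) Y := by
  obtain ⟨g, hg, hgf⟩ := h
  exact ⟨g ∘ φ, hg.comp hφ hφX, fun y hy => hgf _ (hφX hy)⟩

theorem of_mem_slitPlane (hf : ContinuousOn f X) (h : ∀ x ∈ X, f x ∈ slitPlane) : HasLogOn f X :=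
  ⟨fun x => log (f x), hf.clog h, fun x hx => exp_log (slitPlane_ne_zero (h x hx))⟩

theorem union {X' : Set E} (h : HasLogOn f X) (h' : HasLogOn f X') (hX : IsClosed X)
    (hX' : IsClosed X') (hXX' : (X ∩ X').Subsingleton) : HasLogOn f (X ∪ X') := by
  classical
  obtain ⟨g, hg, hgf⟩ := h
  obtain ⟨g', hg', hgf'⟩ := h'
  obtain ⟨c, hc, hgc⟩ : ∃ c, exp c = 1 ∧ ∀ x ∈ X ∩ X', g x = g' x + c := by
    rcases (X ∩ X').eq_empty_or_nonempty with hempty | ⟨x, hx⟩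
    · exact ⟨0, exp_zero, by simp [hempty]⟩
    · refine ⟨g x - g' x, ?_, fun y hy => by rw [hXX' hy hx]; ring⟩
      rw [exp_sub, hgf x hx.1, ← hgf' x hx.2, div_self (exp_ne_zero _)]
  have hX_eq : EqOn (X.piecewise g fun x => g' x + c) g X := piecewise_eqOn _ _ _
  have hX'_eq : EqOn (X.piecewise g fun x => g' x + c) (fun x => g' x + c) X' := by
    intro x hx
    by_cases hxX : x ∈ X
    · rw [hX_eq hxX, hgc x ⟨hxX, hx⟩]
    · exact piecewise_eq_of_notMem _ _ _ hxX
  refine ⟨X.piecewise g fun x => g' x + c,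
    (hg.congr hX_eq).union_of_isClosed ((hg'.add continuousOn_const).congr hX'_eq) hX hX', ?_⟩
  rintro x (hx | hx)
  · rw [hX_eq hx, hgf x hx]
  · rw [hX'_eq hx, exp_add, hc, mul_one, hgf' x hx]

end HasLogOn

/-- Eilenberg's property (b): every continuous nonvanishing complex function on `X` has a
continuous logarithm. -/
def HasPropertyB (X : Set E) : Prop :=
  ∀ f : E → ℂ, ContinuousOn f X → (∀ x ∈ X, f x ≠ 0) → HasLogOn f X

namespace HasPropertyB

protected theorem univ [LocallyPathConnectedSpace E] [SimplyConnectedSpace E] :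
    HasPropertyB (univ : Set E) := fun f hf hf0 =>
  exists_continuousOn_eqOn_exp_comp (Homeomorph.Set.univ E).toHomotopyEquiv.simplyConnectedSpace
    isOpen_univ hf (by simpa using hf0)

theorem of_subsingleton (hX : X.Subsingleton) : HasPropertyB X := fun f _ hf0 =>
  ⟨fun x => log (f x), hX.continuousOn _, fun x hx => exp_log (hf0 x hx)⟩

theorem of_retract (hX : HasPropertyB X) {i : F → E} {r : E → F} (hr : ContinuousOn r X)
    (hrY : MapsTo r X Y) (hi : ContinuousOn i Y) (hiX : MapsTo i Y X) (hri : LeftInvOn r i Y) :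
    HasPropertyB Y := fun f hf hf0 =>
  ((hX (f ∘ r) (hf.comp hr hrY) fun x hx => hf0 _ (hrY hx)).comp hi hiX).congr fun y hy => by
    simp only [Function.comp_apply, hri hy]

protected theorem Icc {a b : ℝ} (hab : a ≤ b) : HasPropertyB (Icc a b) :=
  of_retract .univ (r := fun x => projIcc a b hab x) (i := id)
    (continuous_subtype_val.comp continuous_projIcc).continuousOn (fun x _ => (projIcc a b hab x).2)
    continuousOn_id (mapsTo_univ _ _) fun _ hx => by simp [projIcc_of_mem hab hx]

theorem image [T2Space F] (hX : HasPropertyB X) (hXc : IsCompact X) {γ : E → F}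
    (hγ : ContinuousOn γ X) (hγi : InjOn γ X) : HasPropertyB (γ '' X) := by
  rcases X.eq_empty_or_nonempty with rfl | hne
  · simpa using of_subsingleton subsingleton_empty
  have : Nonempty E := ⟨hne.some⟩
  have hinv := hγi.leftInvOn_invFunOn
  refine hX.of_retract hγ (mapsTo_image γ X) (i := Function.invFunOn γ X) ?_ ?_ ?_
  · rw [continuousOn_iff_isClosed]
    intro t ht
    refine ⟨γ '' (X ∩ t), ((hXc.inter_right ht).image_of_continuousOn
      (hγ.mono inter_subset_left)).isClosed, ?_⟩
    ext y
    constructor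
    · rintro ⟨hy, x, hx, rfl⟩
      rw [mem_preimage, hinv hx] at hy
      exact ⟨⟨x, ⟨hx, hy⟩, rfl⟩, x, hx, rfl⟩
    · rintro ⟨⟨x, ⟨hx, hxt⟩, rfl⟩, -⟩
      exact ⟨by rwa [mem_preimage, hinv hx], x, hx, rfl⟩
  · rintro _ ⟨x, hx, rfl⟩
    rwa [hinv hx]
  · rintro _ ⟨x, hx, rfl⟩
    rw [hinv hx]

end HasPropertyB

theorem not_hasLogOn_sphere (p : ℂ) {R : ℝ} (hR : 0 < R) :
    ¬ HasLogOn (fun z => z - p) (sphere p R) := by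
  rintro ⟨g, hg, hgp⟩
  have hmem : ∀ θ, circleMap p R θ ∈ sphere p R := circleMap_mem_sphere p hR.le
  have hexp : ∀ θ, exp (g (circleMap p R θ)) = R * exp (θ * I) := fun θ => by
    simp only [hgp _ (hmem θ), circleMap_sub_center, circleMap_zero]
  -- Both sides lift `θ ↦ R * exp (θ * I)` through `exp`, but only the left one is periodic.
  have hlift : (fun θ => g (circleMap p R θ)) = fun θ : ℝ => g (circleMap p R 0) + θ * I := by
    refine isCoveringMap_exp.eq_of_comp_eq
      (hg.comp_continuous (continuous_circleMap p R) hmem) (by fun_prop) ?_ 0 (by simp)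
    funext θ
    simp [exp_add, hexp]
  have hperiod := congrFun hlift (2 * Real.pi)
  simp [(periodic_circleMap p R).eq] at hperiod

theorem hasLogOn_sub_div_sub_of_ball_subset_compl {K : Set ℂ} {p q : ℂ} {ε : ℝ}
    (hpK : ball p ε ⊆ Kᶜ) (hq : q ∈ ball p ε) : HasLogOn (fun z => (z - p) / (z - q)) K := by
  have hdist : ∀ z ∈ K, ε ≤ ‖z - p‖ := fun z hz =>
    not_lt.1 fun h => hpK (mem_ball_iff_norm.2 h) hz
  have hqp : ‖p - q‖ < ε := by rwa [← mem_ball_iff_norm']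
  have hne : ∀ z ∈ K, z - p ≠ 0 := fun z hz =>
    norm_pos_iff.1 ((norm_nonneg _).trans_lt (hqp.trans_le (hdist z hz)))
  have hlog : HasLogOn (fun z => (z - q) / (z - p)) K := by
    refine .of_mem_slitPlane (.div (by fun_prop) (by fun_prop) hne) fun z hz => ?_
    rw [show (z - q) / (z - p) = 1 + (p - q) / (z - p) by field_simp [hne z hz]; ring]
    apply mem_slitPlane_of_norm_lt_one
    rw [norm_div, div_lt_one (norm_pos_iff.2 (hne z hz))]
    exact hqp.trans_le (hdist z hz)
  simpa only [inv_div] using hlog.inv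

theorem Unseparated.hasLogOn {K : Set ℂ} (hK : IsClosed K) {p q : ℂ} (h : Unseparated K p q) :
    HasLogOn (fun z => (z - p) / (z - q)) K := by
  have hsub : connectedComponentIn Kᶜ p ⊆ Kᶜ := connectedComponentIn_subset _ _
  refine isPreconnected_connectedComponentIn.induction₂
    (fun p q => HasLogOn (fun z => (z - p) / (z - q)) K) ?_ ?_ ?_
    (Unseparated.refl h.notMem_left) h
  · intro x hx
    obtain ⟨ε, hε, hball⟩ := isOpen_iff.1 hK.isOpen_compl x (hsub hx)
    filter_upwards [mem_nhdsWithin_of_mem_nhds (ball_mem_nhds x hε)] with y hy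
    exact hasLogOn_sub_div_sub_of_ball_subset_compl hball hy
  · intro x y z _ hy _ hxy hyz
    refine (hxy.mul hyz).congr fun w hw => ?_
    have : w - y ≠ 0 := sub_ne_zero.2 fun h => hsub hy (h ▸ hw)
    field_simp
  · intro x y _ _ hxy
    simpa only [inv_div] using hxy.inv

/-- If `p` lies in a bounded component `P` of the complement and `q` does not, a logarithm of
`(z - p) / (z - q)` on the boundary of `P` lets one modify `z - p` inside `P` so that it becomes a
nonvanishing function on the whole plane, which is impossible. -/
theorem HasLogOn.unseparated_of_isBounded {X : Set ℂ} (hX : IsClosed X) {p q : ℂ} (hp : p ∉ X)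
    (hq : q ∉ X) (hb : IsBounded (connectedComponentIn Xᶜ p))
    (h : HasLogOn (fun z => (z - p) / (z - q)) X) : Unseparated X p q := by
  classical
  by_contra hpq
  obtain ⟨g, hg, hgpq⟩ := h
  set P := connectedComponentIn Xᶜ p
  have hpP : p ∈ P := mem_connectedComponentIn hp
  obtain ⟨G, hG⟩ : ∃ G : C(ℂ, ℂ), EqOn G g X := by
    obtain ⟨G, hG⟩ := ContinuousMap.exists_restrict_eq hX ⟨X.domRestrict g, hg.domRestrict⟩
    exact ⟨G, fun z hz => congrArg (· ⟨z, hz⟩) hG⟩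
  have hfrontier : frontier P ⊆ X := by
    intro z hz
    by_contra hzX
    rw [hX.isOpen_compl.connectedComponentIn.frontier_eq] at hz
    exact hz.2 (mem_connectedComponentIn_of_mem_closure hX.isOpen_compl hz.1 hzX)
  let f : ℂ → ℂ := fun z => if z ∈ P then (z - q) * exp (G z) else z - p
  have hf : Continuous f := by
    refine Continuous.if (fun z hz => ?_) (by fun_prop) (by fun_prop)
    have hzX := hfrontier hz
    have hzq : z - q ≠ 0 := sub_ne_zero.2 fun h => hq (h ▸ hzX)
    rw [hG hzX, hgpq z hzX, mul_div_cancel₀ _ hzq]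
  have hf0 : ∀ z, f z ≠ 0 := by
    intro z
    by_cases hz : z ∈ P
    · simpa [f, hz, sub_eq_zero] using fun h : z = q => hpq (h ▸ hz)
    · simpa [f, hz, sub_eq_zero] using fun h : z = p => hz (h ▸ hpP)
  obtain ⟨R, hR, hPR⟩ := hb.subset_ball_lt 0 p
  refine not_hasLogOn_sphere p hR (((HasPropertyB.univ f hf.continuousOn fun z _ => hf0 z).mono
    (subset_univ _)).congr fun z hz => if_neg fun hzP => ?_)
  exact (mem_ball.1 (hPR hzP)).ne (mem_sphere.1 hz)

theorem unseparated_iff_hasLogOn {X : Set ℂ} (hX : IsCompact X) {p q : ℂ} (hp : p ∉ X)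
    (hq : q ∉ X) : Unseparated X p q ↔ HasLogOn (fun z => (z - p) / (z - q)) X := by
  refine ⟨Unseparated.hasLogOn hX.isClosed, fun h => ?_⟩
  by_cases hpb : IsBounded (connectedComponentIn Xᶜ p)
  · exact h.unseparated_of_isBounded hX.isClosed hp hq hpb
  by_cases hqb : IsBounded (connectedComponentIn Xᶜ q)
  · exact (HasLogOn.unseparated_of_isBounded hX.isClosed hq hp hqb
      (by simpa only [inv_div] using h.inv)).symm
  exact .of_not_isBounded (by simp [Complex.rank_real_complex]) hX.isBounded hpb hqb

end Logarithms

section Janiszewski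

variable {E : Type*} [TopologicalSpace E] {K τ : Set E} {p q : E}

theorem Unseparated.union_complex {K τ : Set ℂ} {p q : ℂ} (hK : IsCompact K) (hτ : IsCompact τ)
    (hτB : HasPropertyB τ) (hKτ : (K ∩ τ).Subsingleton) (hp : p ∉ τ) (hq : q ∉ τ)
    (h : Unseparated K p q) : Unseparated (K ∪ τ) p q := by
  have hpτ : ∀ z ∈ τ, z - p ≠ 0 := fun z hz => sub_ne_zero.2 fun h => hp (h ▸ hz)
  have hqτ : ∀ z ∈ τ, z - q ≠ 0 := fun z hz => sub_ne_zero.2 fun h => hq (h ▸ hz)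
  rw [unseparated_iff_hasLogOn (hK.union hτ) (by simp [h.notMem_left, hp])
    (by simp [h.notMem_right, hq])]
  exact (h.hasLogOn hK.isClosed).union
    (hτB _ (.div (by fun_prop) (by fun_prop) hqτ) fun z hz => div_ne_zero (hpτ z hz) (hqτ z hz))
    hK.isClosed hτ.isClosed hKτ

theorem Unseparated.union (e : E ≃ₜ ℂ) (hK : IsCompact K) (hτ : IsCompact τ)
    (hτB : HasPropertyB τ) (hKτ : (K ∩ τ).Subsingleton) (hp : p ∉ τ) (hq : q ∉ τ)
    (h : Unseparated K p q) : Unseparated (K ∪ τ) p q := by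
  have himage : Unseparated (e '' K ∪ e '' τ) (e p) (e q) :=
    (h.image e).union_complex (hK.image e.continuous) (hτ.image e.continuous)
      (hτB.image hτ e.continuous.continuousOn e.injective.injOn)
      (image_inter e.injective ▸ hKτ.image e) (by simpa using hp) (by simpa using hq)
  simpa [← image_union, image_image] using himage.image e.symm

theorem Unseparated.union_biUnion {ι : Type*} (e : E ≃ₜ ℂ) (hK : IsCompact K) {s : Finset ι}
    {τ : ι → Set E} (hτ : ∀ i ∈ s, IsCompact (τ i)) (hτB : ∀ i ∈ s, HasPropertyB (τ i))
    (hτK : ∀ i ∈ s, ((K ∪ ⋃ j ∈ s, ⋃ _ : j ≠ i, τ j) ∩ τ i).Subsingleton)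
    (hp : ∀ i ∈ s, p ∉ τ i) (hq : ∀ i ∈ s, q ∉ τ i) (h : Unseparated K p q) :
    Unseparated (K ∪ ⋃ i ∈ s, τ i) p q := by
  classical
  suffices ∀ t ⊆ s, Unseparated (K ∪ ⋃ i ∈ t, τ i) p q from this s subset_rfl
  intro t
  induction t using Finset.induction_on with
  | empty => simpa using h
  | insert i t hit ih =>
    intro hts
    obtain ⟨his, hts⟩ := Finset.insert_subset_iff.1 hts
    rw [Finset.set_biUnion_insert, union_comm (τ i), ← union_assoc]
    refine (ih hts).union e (hK.union (t.isCompact_biUnion fun j hj => hτ j (hts hj))) (hτ i his)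
      (hτB i his) ((hτK i his).anti (inter_subset_inter_left _ (union_subset_union_right _ ?_)))
      (hp i his) (hq i his)
    exact iUnion₂_subset fun j hj =>
      subset_iUnion₂_of_subset j (hts hj)
        (subset_iUnion_of_subset (fun h => hit (h ▸ hj)) subset_rfl)

end Janiszewski

namespace IsArcBetween

variable {A C : Set Pt} {p q : Pt}

theorem symm (h : IsArcBetween A p q) : IsArcBetween A q p := by
  obtain ⟨f, hf, hfi, rfl, rfl, rfl⟩ := h
  have hmaps : MapsTo (fun t : ℝ => 1 - t) (Icc 0 1) (Icc 0 1) := fun t ht =>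
    ⟨by linarith [ht.2], by linarith [ht.1]⟩
  refine ⟨fun t => f (1 - t), hf.comp (by fun_prop) hmaps,
    hfi.comp sub_right_injective.injOn hmaps, by simp, by simp, ?_⟩
  rw [← image_image f (fun t => 1 - t), image_const_sub_Icc]
  norm_num

theorem isCompact (h : IsArcBetween A p q) : IsCompact A := by
  obtain ⟨f, hf, -, -, -, rfl⟩ := h
  exact isCompact_Icc.image_of_continuousOn hf

theorem right_mem (h : IsArcBetween A p q) : q ∈ A := by
  obtain ⟨f, -, -, -, rfl, rfl⟩ := h
  exact mem_image_of_mem f (right_mem_Icc.2 zero_le_one)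

theorem left_mem (h : IsArcBetween A p q) : p ∈ A :=
  h.symm.right_mem

theorem exists_image_Ico (h : IsArcBetween A p q) :
    ∃ f : ℝ → Pt, ContinuousOn f (Icc 0 1) ∧ InjOn f (Icc 0 1) ∧ f 1 = q ∧
      A \ {q} = f '' Ico 0 1 := by
  obtain ⟨f, hf, hfi, -, rfl, rfl⟩ := h
  refine ⟨f, hf, hfi, rfl, ?_⟩
  rw [← image_singleton, ← hfi.image_sdiff_subset (by simp), Icc_sdiff_right]

theorem isPreconnected_diff_right (h : IsArcBetween A p q) : IsPreconnected (A \ {q}) := by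
  obtain ⟨f, hf, -, -, hA⟩ := h.exists_image_Ico
  rw [hA]
  exact isPreconnected_Ico.image f (hf.mono Ico_subset_Icc_self)

theorem right_mem_closure_diff (h : IsArcBetween A p q) : q ∈ closure (A \ {q}) := by
  obtain ⟨f, hf, -, rfl, hA⟩ := h.exists_image_Ico
  rw [hA]
  have h1 : (1 : ℝ) ∈ closure (Ico 0 1) := by simp
  exact ((hf 1 (by simp)).mono Ico_subset_Icc_self).mem_closure_image h1

theorem exists_mem_ne (h : IsArcBetween A p q) : ∃ x ∈ A, x ≠ p ∧ x ≠ q := by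
  obtain ⟨f, -, hfi, rfl, rfl, rfl⟩ := h
  have h2 : (1 / 2 : ℝ) ∈ Icc (0 : ℝ) 1 := by norm_num
  exact ⟨_, mem_image_of_mem f h2,
    fun h => absurd (hfi h2 (by simp) h) (by norm_num),
    fun h => absurd (hfi h2 (by simp) h) (by norm_num)⟩

theorem exists_subarc (h : IsArcBetween A p q) (hC : IsClosed C) :
    ∃ τ ⊆ A, IsCompact τ ∧ HasPropertyB τ ∧ A ∩ C ⊆ τ ∧ (p ∈ τ → p ∈ C) ∧ (q ∈ τ → q ∈ C) := by
  obtain ⟨f, hf, hfi, rfl, rfl, rfl⟩ := h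
  have hT : IsCompact (Icc 0 1 ∩ f ⁻¹' C) :=
    isCompact_Icc.of_isClosed_subset (hf.preimage_isClosed_of_isClosed isClosed_Icc hC)
      inter_subset_left
  -- The witness is the part of the arc between its first and its last point in `C`.
  rcases (Icc 0 1 ∩ f ⁻¹' C).eq_empty_or_nonempty with hempty | hne
  · refine ⟨∅, empty_subset _, isCompact_empty, .of_subsingleton subsingleton_empty, ?_, by simp,
      by simp⟩
    rintro _ ⟨⟨t, ht, rfl⟩, htC⟩
    exact hempty.subset ⟨ht, htC⟩
  obtain ⟨a, ⟨ha, haC⟩, ha_le⟩ := hT.exists_isLeast hne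
  obtain ⟨b, ⟨hb, hbC⟩, hb_ge⟩ := hT.exists_isGreatest hne
  have hsub : Icc a b ⊆ Icc 0 1 := Icc_subset_Icc ha.1 hb.2
  refine ⟨f '' Icc a b, image_mono hsub, isCompact_Icc.image_of_continuousOn (hf.mono hsub),
    (HasPropertyB.Icc (ha_le ⟨hb, hbC⟩)).image isCompact_Icc (hf.mono hsub) (hfi.mono hsub),
    ?_, ?_, ?_⟩
  · rintro _ ⟨⟨t, ht, rfl⟩, htC⟩
    exact mem_image_of_mem f ⟨ha_le ⟨ht, htC⟩, hb_ge ⟨ht, htC⟩⟩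
  · rintro ⟨t, ht, h0⟩
    obtain rfl := hfi (hsub ht) (by simp) h0
    rwa [le_antisymm ht.1 ha.1] at haC
  · rintro ⟨t, ht, h1⟩
    obtain rfl := hfi (hsub ht) (by simp) h1
    rwa [le_antisymm hb.2 ht.2] at hbC

end IsArcBetween

section Exposure

variable {V : Type*} {H : SimpleGraph V} {O W A B D : Set V} {c d y : V}

/-- The vertices of `W` with a neighbour outside `W`. -/
def boundary (H : SimpleGraph V) (W : Set V) : Set V :=
  {v ∈ W | ∃ y ∉ W, H.Adj v y}

/-- The vertices reached from `O` by a walk all of whose vertices but the last lie in `D`: those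
that become exposed when `D` is deleted, if `O` is exposed from the start and deleting an exposed
vertex exposes its neighbours. -/
def exposed (H : SimpleGraph V) (O D : Set V) : Set V :=
  {x | ∃ o ∈ O, Relation.ReflTransGen (fun u v => u ∈ D ∧ H.Adj u v) o x}

theorem subset_exposed (D : Set V) : O ⊆ exposed H O D := fun o ho => ⟨o, ho, .refl⟩

theorem exposed_mono (h : A ⊆ B) : exposed H O A ⊆ exposed H O B := fun _ ⟨o, ho, hox⟩ =>
  ⟨o, ho, Relation.ReflTransGen.mono (fun _ _ huv => ⟨h huv.1, huv.2⟩) _ _ hox⟩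

theorem mem_exposed_of_adj (hdD : d ∈ D) (hd : d ∈ exposed H O D) (hdy : H.Adj d y) :
    y ∈ exposed H O D :=
  let ⟨o, ho, hod⟩ := hd
  ⟨o, ho, hod.tail ⟨hdD, hdy⟩⟩

/-- Two sets `A`, `B` of total size at most that of `W`, each exposing all of `W` upon deletion.
The last two fields are the invariants that allow `W` to be enlarged by one vertex. -/
structure ExposingPair (H : SimpleGraph V) (O W A B : Set V) : Prop where
  subset : O ⊆ W
  left_subset : A ⊆ W
  right_subset : B ⊆ W
  ncard_add_ncard_le : A.ncard + B.ncard ≤ W.ncard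
  left_exposes : W ⊆ exposed H O A
  right_exposes : W ⊆ exposed H O B
  mem_or_exists_adj : ∀ w ∈ W, w ∈ O ∨ ∃ z ∈ W, H.Adj w z
  subsingleton_boundary_diff : (boundary H W \ (A ∪ B)).Subsingleton

namespace ExposingPair

theorem symm (h : ExposingPair H O W A B) : ExposingPair H O W B A where
  subset := h.subset
  left_subset := h.right_subset
  right_subset := h.left_subset
  ncard_add_ncard_le := add_comm A.ncard _ ▸ h.ncard_add_ncard_le
  left_exposes := h.right_exposes
  right_exposes := h.left_exposes
  mem_or_exists_adj := h.mem_or_exists_adj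
  subsingleton_boundary_diff := union_comm A B ▸ h.subsingleton_boundary_diff

protected theorem refl (O : Set V) : ExposingPair H O O O ∅ where
  subset := subset_rfl
  left_subset := subset_rfl
  right_subset := empty_subset O
  ncard_add_ncard_le := by simp
  left_exposes := subset_exposed O
  right_exposes := subset_exposed ∅
  mem_or_exists_adj _ hw := .inl hw
  subsingleton_boundary_diff _ hv := absurd (.inl hv.1.1) hv.2

protected theorem insert [Finite V] (h : ExposingPair H O W A B) (hc : c ∈ A) (hd : d ∈ W)
    (hy : y ∉ W) (hcy : H.Adj c y) (hdy : H.Adj d y) (hboundary : boundary H W \ (A ∪ B) ⊆ {d}) :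
    ExposingPair H O (insert y W) A (insert d B) where
  subset := h.subset.trans (subset_insert y W)
  left_subset := h.left_subset.trans (subset_insert y W)
  right_subset := insert_subset (.inr hd) (h.right_subset.trans (subset_insert y W))
  ncard_add_ncard_le := by
    have := h.ncard_add_ncard_le
    have := ncard_insert_le d B
    have := ncard_insert_of_notMem hy
    lia
  left_exposes := insert_subset
    (mem_exposed_of_adj hc (h.left_exposes (h.left_subset hc)) hcy) h.left_exposes
  right_exposes := by
    have hW : W ⊆ exposed H O (insert d B) :=
      h.right_exposes.trans (exposed_mono (subset_insert d B))
    exact insert_subset (mem_exposed_of_adj (mem_insert d B) (hW hd) hdy) hW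
  mem_or_exists_adj := by
    rintro w (rfl | hw)
    · exact .inr ⟨d, .inr hd, hdy.symm⟩
    · exact (h.mem_or_exists_adj w hw).imp_right fun ⟨z, hz, hwz⟩ => ⟨z, .inr hz, hwz⟩
  subsingleton_boundary_diff := by
    refine subsingleton_singleton.anti (t := {y}) ?_
    rintro v ⟨⟨rfl | hv, z, hz, hvz⟩, hvAB⟩
    · rfl
    · refine absurd (hboundary ⟨⟨hv, z, fun hzW => hz (.inr hzW), hvz⟩, ?_⟩) ?_
      · exact fun h => hvAB (h.imp_right .inr)
      · exact fun h => hvAB (.inr (.inl h))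

theorem exists_insert [Finite V] (h : ExposingPair H O W A B) (hW : (boundary H W).Nonempty)
    (hpair : ∀ w ∈ boundary H W, (w ∈ O ∨ ∃ z ∈ W, H.Adj w z) →
      ∃ x ∈ W, ∃ y ∉ W, x ≠ w ∧ H.Adj w y ∧ H.Adj x y) :
    ∃ y ∉ W, ∃ A' B', ExposingPair H O (insert y W) A' B' := by
  obtain ⟨w, hw, hwAB⟩ : ∃ w ∈ boundary H W, boundary H W \ (A ∪ B) ⊆ {w} := by
    rcases h.subsingleton_boundary_diff.eq_empty_or_singleton with hempty | ⟨w, hw⟩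
    · exact hW.imp fun w hw => ⟨hw, hempty ▸ empty_subset _⟩
    · exact ⟨w, (hw.symm.subset rfl).1, hw.subset⟩
  obtain ⟨x, hx, y, hy, hxw, hwy, hxy⟩ := hpair w hw (h.mem_or_exists_adj w hw.1)
  obtain ⟨c, d, hc, hd, hcy, hdy, hdAB⟩ : ∃ c d, c ∈ A ∪ B ∧ d ∈ W ∧ H.Adj c y ∧ H.Adj d y ∧
      boundary H W \ (A ∪ B) ⊆ {d} := by
    by_cases hwn : w ∈ A ∪ B
    · exact ⟨w, x, hwn, hx, hwy, hxy, fun v hv => absurd (hwAB hv ▸ hwn) hv.2⟩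
    · exact ⟨x, w, by_contra fun hxn => hxw (hwAB ⟨⟨hx, y, hy, hxy⟩, hxn⟩), hw.1, hxy, hwy, hwAB⟩
  obtain hc | hc := hc
  · exact ⟨y, hy, A, _, h.insert hc hd hy hcy hdy hdAB⟩
  · exact ⟨y, hy, B, _, h.symm.insert hc hd hy hcy hdy (union_comm A B ▸ hdAB)⟩

end ExposingPair

theorem exists_exposed_eq_univ [Finite V] (H : SimpleGraph V) (O : Set V)
    (hconn : ∀ W, O ⊆ W → W ≠ univ → (boundary H W).Nonempty)
    (hpair : ∀ W, O ⊆ W → ∀ w ∈ boundary H W, (w ∈ O ∨ ∃ z ∈ W, H.Adj w z) →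
      ∃ x ∈ W, ∃ y ∉ W, x ≠ w ∧ H.Adj w y ∧ H.Adj x y) :
    ∃ D : Set V, 2 * D.ncard ≤ Nat.card V ∧ exposed H O D = univ := by
  obtain ⟨W, ⟨A, B, h⟩, hmax⟩ := (toFinite {W | ∃ A B, ExposingPair H O W A B}).exists_maximal
    ⟨O, O, ∅, .refl O⟩
  obtain rfl : W = univ := by
    by_contra hW
    obtain ⟨y, hy, hinsert⟩ := h.exists_insert (hconn W h.subset hW) (hpair W h.subset)
    exact hy (hmax hinsert (subset_insert y W) (mem_insert y W))
  have hcard := h.ncard_add_ncard_le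
  rw [ncard_univ] at hcard
  rcases le_total A.ncard B.ncard with hAB | hBA
  · exact ⟨A, by lia, univ_subset_iff.1 h.left_exposes⟩
  · exact ⟨B, by lia, univ_subset_iff.1 h.right_exposes⟩

end Exposure

section Subgraph

variable {V : Type*} {G : SimpleGraph V} {H : G.Subgraph} {S : Set V} {E E' : Set (Sym2 V)}
  {e : Sym2 V} {w : V}

theorem mem_edgeSet_deleteEdges : e ∈ (H.deleteEdges E).edgeSet ↔ e ∈ H.edgeSet ∧ e ∉ E := by
  induction e with | _ u v
  simp

theorem deleteVerts_le_deleteEdges (hE : ∀ e ∈ E, e ∈ H.edgeSet → ∃ v ∈ e, v ∈ S) :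
    H.deleteVerts S ≤ H.deleteEdges E := by
  refine ⟨by simp, fun u v huv => ?_⟩
  obtain ⟨-, hu, -, hv, huv⟩ := SimpleGraph.Subgraph.deleteVerts_adj.1 huv
  refine H.deleteEdges_adj E u v |>.2 ⟨huv, fun he => ?_⟩
  obtain ⟨z, hz, hzS⟩ := hE _ he huv
  obtain rfl | rfl := Sym2.mem_iff.1 hz
  exacts [hu hzS, hv hzS]

theorem deleteVerts_compl_sup_deleteVerts (h : ∀ u ∈ S, ∀ v ∉ S, ¬ H.Adj u v) :
    H.deleteVerts Sᶜ ⊔ H.deleteVerts S = H := by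
  refine le_antisymm (sup_le SimpleGraph.Subgraph.deleteVerts_le
    SimpleGraph.Subgraph.deleteVerts_le) ⟨by simp, fun u v huv => ?_⟩
  have hu := H.edge_vert huv
  have hv := H.edge_vert huv.symm
  have hvu := huv.symm
  simp only [SimpleGraph.Subgraph.sup_adj, SimpleGraph.Subgraph.deleteVerts_adj, mem_compl_iff]
  grind

theorem deleteVerts_compl_inf_deleteVerts : H.deleteVerts Sᶜ ⊓ H.deleteVerts S = ⊥ := by
  rw [SimpleGraph.Subgraph.eq_bot_iff_verts_eq_empty]
  ext
  simp +contextual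

theorem deleteEdges_sup_deleteEdges (h : Disjoint E E') :
    H.deleteEdges E ⊔ H.deleteEdges E' = H := by
  refine le_antisymm (sup_le (H.deleteEdges_le E) (H.deleteEdges_le E'))
    ⟨subset_union_left, fun u v huv => ?_⟩
  simp only [SimpleGraph.Subgraph.sup_adj, SimpleGraph.Subgraph.deleteEdges_adj, huv, true_and]
  exact not_and_or.1 fun he => disjoint_left.1 h he.1 he.2

theorem deleteEdges_inf_deleteEdges :
    H.deleteEdges E ⊓ H.deleteEdges E' = H.deleteEdges (E ∪ E') := by
  ext u v
  · simp
  · simp only [SimpleGraph.Subgraph.inf_adj, SimpleGraph.Subgraph.deleteEdges_adj, mem_union]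
    tauto

theorem deleteEdges_le_deleteVerts_sup_singletonSubgraph (hE : ∀ z, s(w, z) ∈ E) :
    H.deleteEdges E ≤ H.deleteVerts {w} ⊔ G.singletonSubgraph w := by
  refine ⟨fun v hv => ?_, fun u v huv => .inl ?_⟩
  · by_cases hvw : v = w
    · exact .inr hvw
    · exact .inl ⟨hv, hvw⟩
  · obtain ⟨huv, he⟩ := (H.deleteEdges_adj E u v).1 huv
    refine SimpleGraph.Subgraph.deleteVerts_adj.2
      ⟨H.edge_vert huv, ?_, H.edge_vert huv.symm, ?_, huv⟩
    · rintro rfl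
      exact he (hE v)
    · rintro rfl
      exact he (Sym2.eq_swap ▸ hE u)

theorem deleteEdges_image_mk_compl_sup_deleteEdges (w : V) (S : Set V) :
    H.deleteEdges ((fun z => s(w, z)) '' Sᶜ) ⊔ H.deleteEdges ((fun z => s(w, z)) '' S) = H :=
  deleteEdges_sup_deleteEdges <|
    (disjoint_image_iff fun _ _ h => Sym2.congr_right.1 h).2 disjoint_compl_left

theorem deleteEdges_image_mk_compl_inf_deleteEdges_le (w : V) (S : Set V) :
    H.deleteEdges ((fun z => s(w, z)) '' Sᶜ) ⊓ H.deleteEdges ((fun z => s(w, z)) '' S) ≤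
      H.deleteVerts {w} ⊔ G.singletonSubgraph w := by
  rw [deleteEdges_inf_deleteEdges, ← image_union, compl_union_self]
  exact deleteEdges_le_deleteVerts_sup_singletonSubgraph fun z => mem_image_of_mem _ trivial

end Subgraph

namespace PlanarDrawing

variable {V : Type} [Fintype V] {G : SimpleGraph V} (Γ : PlanarDrawing G) {H K : G.Subgraph}
  {S T W : Set V} {e : Sym2 V} {d u v w y : V} {a o x : Pt}

section Trace

/-- The point set occupied by the restriction of the drawing to a subgraph. -/
def trace (H : G.Subgraph) : Set Pt :=
  drawingUnion Γ H.verts H.edgeSet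

theorem mem_trace :
    x ∈ Γ.trace H ↔ (∃ v ∈ H.verts, Γ.ρ v = x) ∨ ∃ e ∈ H.edgeSet, x ∈ Γ.arc e := by
  simp [trace, drawingUnion]

theorem arc_subset_trace (he : e ∈ H.edgeSet) : Γ.arc e ⊆ Γ.trace H := fun _ hx =>
  Γ.mem_trace.2 (.inr ⟨e, he, hx⟩)

theorem mem_of_rho_mem_arc (he : e ∈ H.edgeSet) (h : Γ.ρ v ∈ Γ.arc e) : v ∈ e :=
  Γ.vertex_mem e (H.edgeSet_subset he) v h

theorem rho_mem_trace : Γ.ρ v ∈ Γ.trace H ↔ v ∈ H.verts := by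
  refine ⟨fun h => ?_, fun hv => Γ.mem_trace.2 (.inl ⟨v, hv, rfl⟩)⟩
  obtain ⟨u, hu, huv⟩ | ⟨e, he, hv⟩ := Γ.mem_trace.1 h
  · exact Γ.inj huv ▸ hu
  · exact H.mem_verts_of_mem_edge he (Γ.mem_of_rho_mem_arc he hv)

theorem exists_rho_eq_of_mem_arc_of_mem_trace (he : e ∈ G.edgeSet) (heH : e ∉ H.edgeSet)
    (hx : x ∈ Γ.arc e) (hxH : x ∈ Γ.trace H) : ∃ v ∈ e, v ∈ H.verts ∧ Γ.ρ v = x := by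
  obtain ⟨v, hv, rfl⟩ | ⟨e', he', hx'⟩ := Γ.mem_trace.1 hxH
  · exact ⟨v, Γ.vertex_mem e he v hx, hv, rfl⟩
  · obtain ⟨v, hve, hve', rfl⟩ := Γ.arcs_cross e he e' (H.edgeSet_subset he')
      (ne_of_mem_of_not_mem he' heH).symm x ⟨hx, hx'⟩
    exact ⟨v, hve, H.mem_verts_of_mem_edge he' hve', rfl⟩

theorem trace_sup : Γ.trace (H ⊔ K) = Γ.trace H ∪ Γ.trace K := by
  ext x
  simp only [mem_union, mem_trace, SimpleGraph.Subgraph.verts_sup, SimpleGraph.Subgraph.edgeSet_sup,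
    or_and_right, exists_or]
  exact or_or_or_comm

theorem trace_inf : Γ.trace (H ⊓ K) = Γ.trace H ∩ Γ.trace K := by
  apply subset_antisymm
  · rintro x hx
    simp only [mem_inter_iff, mem_trace, SimpleGraph.Subgraph.verts_inf,
      SimpleGraph.Subgraph.edgeSet_inf] at hx ⊢
    grind
  · rintro x ⟨hH, hK⟩
    obtain ⟨v, hv, rfl⟩ | ⟨e, he, hx⟩ := Γ.mem_trace.1 hH
    · exact Γ.rho_mem_trace.2 ⟨hv, Γ.rho_mem_trace.1 hK⟩
    · by_cases heK : e ∈ K.edgeSet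
      · exact Γ.arc_subset_trace (by simp [he, heK]) hx
      · obtain ⟨v, hve, hvK, rfl⟩ :=
          Γ.exists_rho_eq_of_mem_arc_of_mem_trace (H.edgeSet_subset he) heK hx hK
        exact Γ.rho_mem_trace.2 ⟨H.mem_verts_of_mem_edge he hve, hvK⟩

theorem trace_mono (h : H ≤ K) : Γ.trace H ⊆ Γ.trace K :=
  sup_eq_right.2 h ▸ Γ.trace_sup ▸ subset_union_left

theorem trace_bot : Γ.trace ⊥ = ∅ := by
  simp [trace, drawingUnion]

theorem trace_singletonSubgraph : Γ.trace (G.singletonSubgraph v) = {Γ.ρ v} := by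
  simp [trace, drawingUnion]

theorem trace_deleteVerts_top (D : Set V) :
    Γ.trace ((⊤ : G.Subgraph).deleteVerts D) = drawingUnion Γ Dᶜ (restrictedEdges G Dᶜ) := by
  have hedges : ((⊤ : G.Subgraph).deleteVerts D).edgeSet = restrictedEdges G Dᶜ := by
    ext e
    induction e with | _ u v
    simp only [SimpleGraph.Subgraph.mem_edgeSet, SimpleGraph.Subgraph.deleteVerts_adj,
      SimpleGraph.Subgraph.verts_top, mem_univ, true_and, SimpleGraph.Subgraph.top_adj,
      restrictedEdges, mem_ofPred_eq, SimpleGraph.mem_edgeSet, Sym2.ball, mem_compl_iff]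
    tauto
  rw [trace, hedges, SimpleGraph.Subgraph.deleteVerts_verts, SimpleGraph.Subgraph.verts_top,
    compl_eq_univ_sdiff]

theorem mem_trace_deleteVerts_or (S : Set V) (hx : x ∈ Γ.trace H) :
    x ∈ Γ.trace (H.deleteVerts S) ∨ (∃ v ∈ S, Γ.ρ v = x) ∨
      ∃ u ∈ S, ∃ v, H.Adj u v ∧ x ∈ Γ.arc s(u, v) := by
  obtain ⟨v, hv, rfl⟩ | ⟨e, he, hxe⟩ := Γ.mem_trace.1 hx
  · by_cases hvS : v ∈ S
    · exact .inr (.inl ⟨v, hvS, rfl⟩)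
    · exact .inl (Γ.rho_mem_trace.2 ⟨hv, hvS⟩)
  induction e with | _ u v
  by_cases hu : u ∈ S
  · exact .inr (.inr ⟨u, hu, v, he, hxe⟩)
  by_cases hv : v ∈ S
  · exact .inr (.inr ⟨v, hv, u, H.adj_symm he, Sym2.eq_swap ▸ hxe⟩)
  exact .inl (Γ.arc_subset_trace (SimpleGraph.Subgraph.deleteVerts_adj.2
    ⟨H.edge_vert he, hu, H.edge_vert (H.adj_symm he), hv, he⟩) hxe)

theorem inter_trace_subset_trace_deleteVerts_union {C Y : Set Pt} (hC : ∀ v ∈ S, Γ.ρ v ∉ C)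
    (hY : ∀ e ∈ H.edgeSet, (∃ v ∈ e, v ∈ S) → Γ.arc e ∩ C ⊆ Y) :
    C ∩ Γ.trace H ⊆ Γ.trace (H.deleteVerts S) ∪ Y := by
  rintro x ⟨hxC, hx⟩
  obtain hx | ⟨v, hv, rfl⟩ | ⟨u, hu, v, huv, hxe⟩ := Γ.mem_trace_deleteVerts_or S hx
  · exact .inl hx
  · exact absurd hxC (hC v hv)
  · exact .inr (hY _ huv ⟨u, Sym2.mem_mk_left u v, hu⟩ ⟨hxe, hxC⟩)

theorem isCompact_trace : IsCompact (Γ.trace H) := by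
  refine (((toFinite H.verts).image Γ.ρ).isCompact).union ((toFinite _).isCompact_biUnion ?_)
  rintro ⟨u, v⟩ he
  exact (Γ.arc_isArc u v (H.edgeSet_subset he)).isCompact

theorem isClosed_trace : IsClosed (Γ.trace H) :=
  Γ.isCompact_trace.isClosed

theorem subsingleton_trace_deleteEdges_inter {τ : Set Pt} (he : e ∈ G.edgeSet) (hτ : τ ⊆ Γ.arc e)
    (hu : u ∈ e) (huτ : Γ.ρ u ∉ τ) : (Γ.trace (H.deleteEdges {e}) ∩ τ).Subsingleton := by
  obtain ⟨v, rfl⟩ := Sym2.mem_iff_exists.1 hu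
  refine (subsingleton_singleton (a := Γ.ρ v)).anti ?_
  rintro x ⟨hxH, hx⟩
  obtain ⟨w, hw, -, rfl⟩ := Γ.exists_rho_eq_of_mem_arc_of_mem_trace he (by simp) (hτ hx) hxH
  obtain rfl | rfl := Sym2.mem_iff.1 hw
  exacts [absurd hx huτ, rfl]

theorem unseparated_trace_of_mem_arc (huv : G.Adj u v) (hu : u ∉ H.verts)
    (hx : x ∈ Γ.arc s(u, v)) (hxv : x ≠ Γ.ρ v) : Unseparated (Γ.trace H) (Γ.ρ u) x := by
  refine .of_isPreconnected (Γ.arc_isArc u v huv).isPreconnected_diff_right ?_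
    ⟨(Γ.arc_isArc u v huv).left_mem, Γ.inj.ne huv.ne⟩ ⟨hx, hxv⟩
  rw [disjoint_left]
  rintro x ⟨hx, hxv⟩ hxH
  obtain ⟨w, hw, hwH, rfl⟩ := Γ.exists_rho_eq_of_mem_arc_of_mem_trace huv
    (fun h => hu (H.mem_verts_of_mem_edge h (Sym2.mem_mk_left u v))) hx hxH
  obtain rfl | rfl := Sym2.mem_iff.1 hw
  exacts [hu hwH, hxv rfl]

theorem exists_subarc_of_mem_edgeSet {C : Set Pt} (hC : IsClosed C) (he : e ∈ G.edgeSet) :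
    ∃ τ ⊆ Γ.arc e, IsCompact τ ∧ HasPropertyB τ ∧ Γ.arc e ∩ C ⊆ τ ∧
      ∀ v, Γ.ρ v ∈ τ → Γ.ρ v ∈ C := by
  induction e with | _ u v
  obtain ⟨τ, hτ, hcompact, hB, hCτ, hu, hv⟩ := (Γ.arc_isArc u v he).exists_subarc hC
  refine ⟨τ, hτ, hcompact, hB, hCτ, fun w hw => ?_⟩
  obtain rfl | rfl := Sym2.mem_iff.1 (Γ.vertex_mem _ he w (hτ hw))
  exacts [hu hw, hv hw]

end Trace

section Face

/-- The face containing the point `a` in the restriction of the drawing to `H`. -/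
def face (H : G.Subgraph) (a : Pt) : Set Pt :=
  connectedComponentIn (Γ.trace H)ᶜ a

/-- The vertices on the boundary of the face containing `a` in the restriction of the drawing to
`H`. -/
def faceVerts (H : G.Subgraph) (a : Pt) : Set V :=
  {v | Γ.ρ v ∈ closure (Γ.face H a)}

theorem mem_faceVerts : v ∈ Γ.faceVerts H a ↔ Γ.ρ v ∈ closure (Γ.face H a) :=
  Iff.rfl

theorem faceVerts_eq (h : o ∈ Γ.face H a) : Γ.faceVerts H a = Γ.faceVerts H o := by
  rw [faceVerts, face, connectedComponentIn_eq h, ← face, ← faceVerts]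

theorem face_anti (h : H ≤ K) : Γ.face K a ⊆ Γ.face H a :=
  connectedComponentIn_mono a (compl_subset_compl.2 (Γ.trace_mono h))

theorem faceVerts_anti (h : H ≤ K) : Γ.faceVerts K a ⊆ Γ.faceVerts H a := fun _ hv =>
  closure_mono (Γ.face_anti h) hv

theorem rho_mem_face_of_mem_faceVerts (hv : v ∈ Γ.faceVerts H a) (hvH : v ∉ H.verts) :
    Γ.ρ v ∈ Γ.face H a :=
  mem_connectedComponentIn_of_mem_closure Γ.isClosed_trace.isOpen_compl hv
    (Γ.rho_mem_trace.not.2 hvH)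

theorem exists_rho_mem_face_deleteVerts (hx : x ∈ Γ.trace H)
    (hxa : x ∈ Γ.face (H.deleteVerts S) a) : ∃ v ∈ S, Γ.ρ v ∈ Γ.face (H.deleteVerts S) a := by
  obtain hx | ⟨v, hv, rfl⟩ | ⟨u, hu, v, huv, hxe⟩ := Γ.mem_trace_deleteVerts_or S hx
  · exact absurd hx (Unseparated.notMem_right hxa)
  · exact ⟨v, hv, hxa⟩
  by_cases hxv : x = Γ.ρ v
  · refine ⟨v, by_contra fun hv => Unseparated.notMem_right hxa ?_, hxv ▸ hxa⟩
    exact hxv ▸ Γ.rho_mem_trace.2 ⟨H.edge_vert huv.symm, hv⟩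
  · exact ⟨u, hu, Unseparated.trans hxa
      (Γ.unseparated_trace_of_mem_arc huv.adj_sub (by simp [hu]) hxe hxv).symm⟩

-- Each removed edge is added back only along its part between its first and last points on the
-- boundary of the face, which misses `S`: by Janiszewski's theorem this cannot separate points.
theorem face_deleteVerts_subset (ha : a ∉ Γ.trace H) (hS : Disjoint (Γ.faceVerts H a) S) :
    Γ.face (H.deleteVerts S) a ⊆ Γ.face H a := by
  refine isPreconnected_connectedComponentIn.subset_connectedComponentIn (mem_connectedComponentIn
    (notMem_subset (Γ.trace_mono SimpleGraph.Subgraph.deleteVerts_le) ha)) fun x hxa hx => ?_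
  obtain ⟨v, hvS, hva⟩ := Γ.exists_rho_mem_face_deleteVerts hx hxa
  choose! τ hτ_sub hτ hτB hτ_closure hτ_rho using fun e (he : e ∈ H.edgeSet) =>
    Γ.exists_subarc_of_mem_edgeSet (isClosed_closure (s := Γ.face H a)) (H.edgeSet_subset he)
  let s := (toFinite {e ∈ H.edgeSet | ∃ u ∈ e, u ∈ S}).toFinset
  have hs : ∀ e, e ∈ s ↔ e ∈ H.edgeSet ∧ ∃ u ∈ e, u ∈ S := by simp [s]
  have hsH : ∀ e ∈ s, e ∈ H.edgeSet := fun e he => ((hs e).1 he).1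
  have hτS : ∀ e ∈ s, ∀ u ∈ S, Γ.ρ u ∉ τ e := fun e he u hu h =>
    disjoint_left.1 hS (hτ_rho e (hsH e he) u h) hu
  have hinter : ∀ e ∈ s,
      ((Γ.trace (H.deleteVerts S) ∪ ⋃ e' ∈ s, ⋃ _ : e' ≠ e, τ e') ∩ τ e).Subsingleton := by
    intro e he
    obtain ⟨heH, u, hue, hu⟩ := (hs e).1 he
    refine (Γ.subsingleton_trace_deleteEdges_inter (H := H) (H.edgeSet_subset heH) (hτ_sub e heH)
      hue (hτS e he u hu)).anti (inter_subset_inter_left _ (union_subset (Γ.trace_mono ?_)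
        (iUnion₂_subset fun e' he' => iUnion_subset fun hne => ?_)))
    · exact deleteVerts_le_deleteEdges fun e' he' _ => he' ▸ ⟨u, hue, hu⟩
    · exact (hτ_sub e' (hsH e' he')).trans (Γ.arc_subset_trace
        (mem_edgeSet_deleteEdges.2 ⟨hsH e' he', hne⟩))
  have hcover : closure (Γ.face H a) ∩ Γ.trace H ⊆ Γ.trace (H.deleteVerts S) ∪ ⋃ e ∈ s, τ e :=
    Γ.inter_trace_subset_trace_deleteVerts_union (fun u hu h => disjoint_left.1 hS h hu)
      fun e he hu => (hτ_closure e he).trans (subset_biUnion_of_mem ((hs e).2 ⟨he, hu⟩))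
  have hva' : Unseparated (Γ.trace (H.deleteVerts S) ∪ ⋃ e ∈ s, τ e) a (Γ.ρ v) :=
    Unseparated.union_biUnion Complex.equivRealProdCLM.toHomeomorph.symm Γ.isCompact_trace
      (fun e he => hτ e (hsH e he)) (fun e he => hτB e (hsH e he)) hinter
      (fun e he h => ha (Γ.arc_subset_trace (hsH e he) (hτ_sub e (hsH e he) h)))
      (fun e he => hτS e he v hvS) hva
  refine disjoint_left.1 hS (subset_closure ?_) hvS
  exact connectedComponentIn_compl_subset_of_closure_inter_subset Γ.isClosed_trace ha hcover hva'

theorem disjoint_face_trace (ha : a ∉ Γ.trace H) (hS : Disjoint (Γ.faceVerts H a) S)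
    (hK : H.deleteVerts S ≤ K) : Disjoint (Γ.face K a) (Γ.trace H) :=
  disjoint_left.2 fun _ hx => connectedComponentIn_subset _ _
    (Γ.face_deleteVerts_subset ha hS (Γ.face_anti hK hx))

theorem disjoint_face_deleteEdges_trace (ha : a ∉ Γ.trace H)
    (hT : ∀ z ∈ T, H.Adj w z → z ∉ Γ.faceVerts H a) :
    Disjoint (Γ.face (H.deleteEdges ((fun z => s(w, z)) '' T)) a) (Γ.trace H) := by
  refine Γ.disjoint_face_trace (S := {z ∈ T | H.Adj w z}) ha
    (disjoint_right.2 fun z hz => hT z hz.1 hz.2) (deleteVerts_le_deleteEdges ?_)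
  rintro _ ⟨z, hz, rfl⟩ hwz
  exact ⟨z, Sym2.mem_mk_right w z, hz, hwz⟩

end Face

section Cofacial

/-- The graph joining distinct vertices that are adjacent or lie on a common face. -/
def cofacialGraph : SimpleGraph V where
  Adj u v := u ≠ v ∧ (G.Adj u v ∨ ∃ a, u ∈ Γ.faceVerts ⊤ a ∧ v ∈ Γ.faceVerts ⊤ a)
  symm := ⟨fun _ _ h =>
    ⟨h.1.symm, h.2.imp G.adj_symm fun ⟨a, hu, hv⟩ => ⟨a, hv, hu⟩⟩⟩
  loopless := ⟨fun _ h => h.1 rfl⟩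

theorem le_cofacialGraph : G ≤ Γ.cofacialGraph := fun _ _ h => ⟨h.ne, .inl h⟩

theorem mem_faceVerts_of_cofacialGraph_adj (hd : d ∈ Γ.faceVerts K o) (hdK : d ∉ K.verts)
    (hdy : Γ.cofacialGraph.Adj d y) : y ∈ Γ.faceVerts K o := by
  have hface : Γ.face K o = Γ.face K (Γ.ρ d) :=
    connectedComponentIn_eq (Γ.rho_mem_face_of_mem_faceVerts hd hdK)
  obtain ⟨-, hadj | ⟨a, hda, hya⟩⟩ := hdy
  · rw [mem_faceVerts, hface]
    exact closure_mono (fun x hx => Γ.unseparated_trace_of_mem_arc hadj hdK hx.1 hx.2)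
      (Γ.arc_isArc d y hadj).right_mem_closure_diff
  · have hface' : Γ.face K a = Γ.face K (Γ.ρ d) := connectedComponentIn_eq
      (Γ.rho_mem_face_of_mem_faceVerts (Γ.faceVerts_anti le_top hda) hdK)
    rw [mem_faceVerts, hface, ← hface']
    exact Γ.faceVerts_anti le_top hya

theorem exposed_subset_faceVerts (D : Set V) :
    exposed Γ.cofacialGraph (Γ.faceVerts ⊤ o) D ⊆
      Γ.faceVerts ((⊤ : G.Subgraph).deleteVerts D) o := by
  rintro x ⟨v, hv, hvx⟩
  induction hvx with
  | refl => exact Γ.faceVerts_anti le_top hv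
  | tail _ hyz ih => exact Γ.mem_faceVerts_of_cofacialGraph_adj ih (by simp [hyz.1]) hyz.2

theorem boundary_cofacialGraph_nonempty (ho : o ∉ Γ.trace ⊤) (hO : Γ.faceVerts ⊤ o ⊆ W)
    (hW : W ≠ univ) : (boundary Γ.cofacialGraph W).Nonempty := by
  by_contra! hempty
  have hnadj : ∀ w ∈ W, ∀ y ∉ W, ¬ Γ.cofacialGraph.Adj w y := fun w hw y hy hwy =>
    hempty.subset ⟨hw, y, hy, hwy⟩
  obtain ⟨y, hy⟩ := (ne_univ_iff_exists_notMem W).1 hW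
  have hcover : (⊤ : G.Subgraph).deleteVerts Wᶜ ⊔ (⊤ : G.Subgraph).deleteVerts W = ⊤ :=
    deleteVerts_compl_sup_deleteVerts fun u hu v hv huv => hnadj u hu v hv (Γ.le_cofacialGraph huv)
  refine not_unseparated_inter (P := fun C => o ∈ C ∨ ∃ z ∈ W, Γ.ρ z ∈ closure C)
    (p := Γ.ρ y) (q := o) Γ.isClosed_trace Γ.isClosed_trace Γ.isClosed_trace
    (hcover ▸ Γ.trace_sup).subset (fun a ha hPa => ?_) (fun a ha hPa => ?_)
    (.inl ⟨Γ.rho_mem_trace.2 (mem_univ y), Γ.rho_mem_trace.not.2 ?_⟩)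
    (.inr ⟨ho, .inl (mem_connectedComponentIn ho)⟩) ?_
  · refine Γ.disjoint_face_trace ha (disjoint_left.2 fun y hya hy => ?_) le_rfl
    obtain hoa | ⟨z, hz, hza⟩ := hPa
    · exact hy (hO (Γ.faceVerts_eq hoa ▸ hya))
    · exact hnadj z hz y hy ⟨ne_of_mem_of_not_mem hz hy, .inr ⟨a, hza, hya⟩⟩
  · exact Γ.disjoint_face_trace ha
      (disjoint_left.2 fun z hza hz => hPa (.inr ⟨z, hz, hza⟩)) le_rfl
  · simpa using hy
  · rw [← Γ.trace_inf, deleteVerts_compl_inf_deleteVerts, Γ.trace_bot]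
    exact .of_isPreconnected isPreconnected_univ (disjoint_empty univ) trivial trivial

theorem exists_mem_complSide_unseparated {P : Set Pt → Prop} (hy : y ∈ T)
    (hwy : Γ.cofacialGraph.Adj w y)
    (hP : ∀ a, w ∈ Γ.faceVerts ⊤ a → y ∈ Γ.faceVerts ⊤ a → P (Γ.face ⊤ a)) :
    ∃ p ∈ complSide (Γ.trace ⊤)
        (Γ.trace ((⊤ : G.Subgraph).deleteEdges ((fun z => s(w, z)) '' T))) P,
      Unseparated (Γ.trace ((⊤ : G.Subgraph).deleteVerts {w})) (Γ.ρ w) p := by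
  have hw : w ∉ ((⊤ : G.Subgraph).deleteVerts {w}).verts := by simp
  obtain ⟨-, hadj | ⟨a, hwa, hya⟩⟩ := hwy
  · obtain ⟨p, hp, hpw, hpy⟩ := (Γ.arc_isArc w y hadj).exists_mem_ne
    have hedge : s(w, y) ∈ (⊤ : G.Subgraph).edgeSet := hadj
    refine ⟨p, .inl ⟨Γ.arc_subset_trace hedge hp, fun hpT => ?_⟩,
      Γ.unseparated_trace_of_mem_arc hadj hw hp hpy⟩
    obtain ⟨v, hv, -, rfl⟩ := Γ.exists_rho_eq_of_mem_arc_of_mem_trace hadj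
      (fun h => (mem_edgeSet_deleteEdges.1 h).2 (mem_image_of_mem _ hy)) hp hpT
    obtain rfl | rfl := Sym2.mem_iff.1 hv
    exacts [hpw rfl, hpy rfl]
  · have ha : a ∉ Γ.trace ⊤ := connectedComponentIn_nonempty_iff.1 (closure_nonempty_iff.1 ⟨_, hwa⟩)
    exact ⟨a, .inr ⟨ha, hP a hwa hya⟩, Unseparated.symm
      (Γ.rho_mem_face_of_mem_faceVerts (Γ.faceVerts_anti le_top hwa) hw)⟩

theorem ne_rho_of_mem_complSide {P : Set Pt → Prop} {p : Pt} (hw : w ∈ K.verts)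
    (hp : p ∈ complSide (Γ.trace ⊤) (Γ.trace K) P) : p ≠ Γ.ρ w := by
  rintro rfl
  exact hp.elim (fun hp => hp.2 (Γ.rho_mem_trace.2 hw)) fun hp => hp.1 (Γ.rho_mem_trace.2 trivial)

-- If this fails, erasing all edges at `w` leaves a complement covered by two disjoint open sides:
-- the faces and edges at `w` belonging to `W`, and those belonging to the complement of `W`. Points
-- `p`, `q` of the two sides are joined through `w` when `w` is erased as well, hence, by
-- Janiszewski's theorem, also past `w`: a contradiction.
theorem exists_mem_adj_adj_of_mem_boundary (ho : o ∉ Γ.trace ⊤) (hO : Γ.faceVerts ⊤ o ⊆ W)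
    (hw : w ∈ boundary Γ.cofacialGraph W)
    (hwW : w ∈ Γ.faceVerts ⊤ o ∨ ∃ z ∈ W, Γ.cofacialGraph.Adj w z) :
    ∃ x ∈ W, ∃ y ∉ W, x ≠ w ∧ Γ.cofacialGraph.Adj w y ∧ Γ.cofacialGraph.Adj x y := by
  by_contra! hcon
  let P : Set Pt → Prop := fun C => o ∈ C ∨ ∃ z ∈ W, z ≠ w ∧ Γ.ρ z ∈ closure C
  let K (T : Set V) : G.Subgraph := (⊤ : G.Subgraph).deleteEdges ((fun z => s(w, z)) '' T)
  have hP : ∀ a, P (Γ.face ⊤ a) → ∀ y ∉ W, Γ.cofacialGraph.Adj w y → y ∉ Γ.faceVerts ⊤ a := by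
    rintro a (hoa | ⟨z, hz, hzw, hza⟩) y hy hwy hya
    · exact hy (hO (Γ.faceVerts_eq hoa ▸ hya))
    · exact hcon z hz y hy hzw hwy ⟨ne_of_mem_of_not_mem hz hy, .inr ⟨a, hza, hya⟩⟩
  obtain ⟨-, y, hy, hwy⟩ := hw
  obtain ⟨p, hp, hwp⟩ : ∃ p ∈ complSide (Γ.trace ⊤) (Γ.trace (K Wᶜ)) fun C => ¬ P C,
      Unseparated (Γ.trace ((⊤ : G.Subgraph).deleteVerts {w})) (Γ.ρ w) p :=
    Γ.exists_mem_complSide_unseparated hy hwy fun a _ hya hPa => hP a hPa y hy hwy hya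
  obtain ⟨q, hq, hwq⟩ : ∃ q ∈ complSide (Γ.trace ⊤) (Γ.trace (K W)) P,
      Unseparated (Γ.trace ((⊤ : G.Subgraph).deleteVerts {w})) (Γ.ρ w) q := by
    obtain hwo | ⟨z, hz, hwz⟩ := hwW
    · exact ⟨o, .inr ⟨ho, .inl (mem_connectedComponentIn ho)⟩, Unseparated.symm
        (Γ.rho_mem_face_of_mem_faceVerts (Γ.faceVerts_anti le_top hwo) (by simp))⟩
    · exact Γ.exists_mem_complSide_unseparated hz hwz fun a _ hza => .inr ⟨z, hz, hwz.ne', hza⟩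
  have hpq : Unseparated (Γ.trace ((⊤ : G.Subgraph).deleteVerts {w}) ∪ {Γ.ρ w}) p q :=
    (hwp.symm.trans hwq).union Complex.equivRealProdCLM.toHomeomorph.symm Γ.isCompact_trace
      isCompact_singleton (.of_subsingleton subsingleton_singleton)
      (subsingleton_singleton.anti inter_subset_right)
      (Γ.ne_rho_of_mem_complSide (K := K Wᶜ) trivial hp)
      (Γ.ne_rho_of_mem_complSide (K := K W) trivial hq)
  have hcover : K Wᶜ ⊔ K W = ⊤ := deleteEdges_image_mk_compl_sup_deleteEdges w W
  have hinter : Γ.trace (K Wᶜ) ∩ Γ.trace (K W) ⊆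
      Γ.trace ((⊤ : G.Subgraph).deleteVerts {w}) ∪ {Γ.ρ w} := by
    rw [← Γ.trace_inf, ← Γ.trace_singletonSubgraph, ← Γ.trace_sup]
    exact Γ.trace_mono (deleteEdges_image_mk_compl_inf_deleteEdges_le w W)
  refine not_unseparated_inter Γ.isClosed_trace Γ.isClosed_trace Γ.isClosed_trace
    (hcover ▸ Γ.trace_sup).subset (fun a ha hPa => ?_) (fun a ha hPa => ?_) hp hq (hpq.anti hinter)
  · exact Γ.disjoint_face_deleteEdges_trace ha
      fun y hy hwy => hP a hPa y hy (Γ.le_cofacialGraph hwy)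
  · exact Γ.disjoint_face_deleteEdges_trace ha
      fun z hz hwz hza => hPa (.inr ⟨z, hz, hwz.adj_sub.ne', hza⟩)

theorem exists_faceVerts_deleteVerts_eq_univ (ho : o ∉ Γ.trace ⊤) :
    ∃ D : Set V, 2 * D.ncard ≤ Nat.card V ∧
      Γ.faceVerts ((⊤ : G.Subgraph).deleteVerts D) o = univ := by
  obtain ⟨D, hcard, hD⟩ := exists_exposed_eq_univ Γ.cofacialGraph (Γ.faceVerts ⊤ o)
    (fun W hO hW => Γ.boundary_cofacialGraph_nonempty ho hO hW)
    (fun W hO w hw hwW => Γ.exists_mem_adj_adj_of_mem_boundary ho hO hw hwW)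
  exact ⟨D, hcard, univ_subset_iff.1 (hD ▸ Γ.exposed_subset_faceVerts D)⟩

theorem isOuterplanePair_of_forall_mem_faceVerts (ho : ¬ IsBounded (Γ.face ⊤ o))
    (hW : ∀ v ∈ W, v ∈ Γ.faceVerts ((⊤ : G.Subgraph).deleteVerts Wᶜ) o) :
    IsOuterplanePair (drawingUnion Γ W (restrictedEdges G W)) (Γ.ρ '' W) := by
  have htrace := Γ.trace_deleteVerts_top Wᶜ
  rw [compl_compl] at htrace
  rw [← htrace]
  rintro _ ⟨x, -, rfl⟩ hx _ ⟨v, hv, rfl⟩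
  have hxo : Unseparated (Γ.trace ((⊤ : G.Subgraph).deleteVerts Wᶜ)) x o :=
    .of_not_isBounded one_lt_rank_plane Γ.isCompact_trace.isBounded hx
      fun h => ho (h.subset (Γ.face_anti le_top))
  exact hxo.connectedComponentIn_eq ▸ hW v hv

end Cofacial

end PlanarDrawing

/-- For every planar drawing `Γ` of an `n`-vertex graph `G` there is a vertex subset
`V'` with `2·|V'| ≥ n` such that the restriction of `Γ` to the induced subgraph
`G[V']` is an outerplane drawing: every vertex point of `V'` lies in the closure of
the (unique) unbounded connected component of the complement of the restricted
drawing. -/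
theorem exists_outerplane_restriction {V : Type} [Fintype V]
    (G : SimpleGraph V) (n : ℕ) (hn : Fintype.card V = n)
    (Γ : PlanarDrawing G) :
    ∃ V' : Finset V, n ≤ 2 * V'.card ∧
      IsOuterplanePair (drawingUnion Γ (↑V' : Set V) (restrictedEdges G (↑V' : Set V)))
        (Γ.ρ '' (↑V' : Set V)) := by
  obtain ⟨o, ho⟩ := exists_not_isBounded_connectedComponentIn_compl one_lt_rank_plane
    (Γ.isCompact_trace (H := ⊤)).isBounded
  have hoΓ : o ∉ Γ.trace ⊤ := fun h =>
    ho (connectedComponentIn_eq_empty (notMem_compl_iff.2 h) ▸ isBounded_empty)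
  obtain ⟨D, hcard, hD⟩ := Γ.exists_faceVerts_deleteVerts_eq_univ hoΓ
  refine ⟨(toFinite Dᶜ).toFinset, ?_, ?_⟩
  · have := ncard_add_ncard_compl D
    rw [← ncard_eq_toFinset_card, ← hn, ← Nat.card_eq_fintype_card]
    lia
  · rw [Finite.coe_toFinset]
    exact Γ.isOuterplanePair_of_forall_mem_faceVerts ho fun v _ => by simp [hD]
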